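/- Fix z > 0. For an integer n ≥ 1 set ν = n − 1/2 and let G_ν(w) = 1/2 + w·y'_{n−1}(w)/y_{n−1}(w) for w > 0, so G_ν(w) = w·Y'_ν(w)/Y_ν(w). There exist a constant C > 0 and an integer N such that for every integer n ≥ N, the derivative of G_ν with respect to its argument satisfies −(1/3)·z/ν − C/ν² ≤ G_ν'(z) ≤ (7/3)·z/ν + C/ν². -/

import Mathlib

/-- Spherical Bessel function of the first kind `j_n`, defined by the standard
recurrence `j_{n+1}(z) = ((2n+1)/z) j_n(z) - j_{n-1}(z)`. -/
noncomputable def jsph : ℕ → ℝ → ℝ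
  | 0, z => Real.sin z / z
  | 1, z => Real.sin z / z ^ 2 - Real.cos z / z
  | (n + 2), z => ((2 * (n : ℝ) + 3) / z) * jsph (n + 1) z - jsph n z

/-- Spherical Bessel function of the second kind `y_n`, defined by the standard
recurrence `y_{n+1}(z) = ((2n+1)/z) y_n(z) - y_{n-1}(z)`. -/
noncomputable def ysph : ℕ → ℝ → ℝ
  | 0, z => -Real.cos z / z
  | 1, z => -Real.cos z / z ^ 2 - Real.sin z / z
  | (n + 2), z => ((2 * (n : ℝ) + 3) / z) * ysph (n + 1) z - ysph n z

/-- Spherical Hankel function of the first kind `h^{(1)}_n`. -/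
noncomputable def h1sph (n : ℕ) (z : ℝ) : ℂ :=
  (jsph n z : ℂ) + Complex.I * (ysph n z : ℂ)

/-- Spherical Hankel function of the second kind `h^{(2)}_n`. -/
noncomputable def h2sph (n : ℕ) (z : ℝ) : ℂ :=
  (jsph n z : ℂ) - Complex.I * (ysph n z : ℂ)

section BesselAux

open intervalIntegral MeasureTheory.MeasureSpace Set Polynomial Real
open scoped Nat

noncomputable def Icar (n : ℕ) (θ : ℝ) : ℝ := ∫ x in (-1)..1, (1 - x ^ 2) ^ n * cos (x * θ)

variable {n : ℕ} {θ : ℝ}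

theorem Icar_zero : Icar 0 θ * θ = 2 * sin θ := by
  rw [mul_comm, Icar]
  simp [mul_integral_comp_mul_right, two_mul]

theorem Icar_rec' (n : ℕ) :
    Icar (n + 1) θ * θ ^ 2 = - (2 * 2 * ((n + 1) * (0 ^ n * cos θ))) +
      2 * (n + 1) * (2 * n + 1) * Icar n θ - 4 * (n + 1) * n * Icar (n - 1) θ := by
  rw [Icar]
  let f (x : ℝ) : ℝ := 1 - x ^ 2
  let u₁ (x : ℝ) : ℝ := f x ^ (n + 1)
  let u₁' (x : ℝ) : ℝ := - (2 * (n + 1) * x * f x ^ n)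
  let v₁ (x : ℝ) : ℝ := sin (x * θ)
  let v₁' (x : ℝ) : ℝ := cos (x * θ) * θ
  let u₂ (x : ℝ) : ℝ := x * (f x) ^ n
  let u₂' (x : ℝ) : ℝ := (f x) ^ n - 2 * n * x ^ 2 * (f x) ^ (n - 1)
  let v₂ (x : ℝ) : ℝ := cos (x * θ)
  let v₂' (x : ℝ) : ℝ := -sin (x * θ) * θ
  have hfd : Continuous f := by fun_prop
  have hu₁d : Continuous u₁' := by fun_prop
  have hv₁d : Continuous v₁' := by fun_prop
  have hu₂d : Continuous u₂' := by fun_prop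
  have hv₂d : Continuous v₂' := by fun_prop
  have hu₁_eval_one : u₁ 1 = 0 := by simp only [u₁, f]; simp
  have hu₁_eval_neg_one : u₁ (-1) = 0 := by simp only [u₁, f]; simp
  have t : u₂ 1 * v₂ 1 - u₂ (-1) * v₂ (-1) = 2 * (0 ^ n * cos θ) := by simp [u₂, v₂, f, ← two_mul]
  have hf (x) : HasDerivAt f (- 2 * x) x := by
    convert! (hasDerivAt_pow 2 x).const_sub 1 using 1
    simp
  have hu₁ (x) : HasDerivAt u₁ (u₁' x) x := by
    convert! (hf x).pow _ using 1
    simp only [Nat.add_succ_sub_one, u₁', Nat.cast_add_one]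
    ring
  have hv₁ (x) : HasDerivAt v₁ (v₁' x) x := (hasDerivAt_mul_const θ).sin
  have hu₂ (x) : HasDerivAt u₂ (u₂' x) x := by
    convert! (hasDerivAt_id' x).fun_mul ((hf x).fun_pow _) using 1
    simp only [u₂']
    ring
  have hv₂ (x) : HasDerivAt v₂ (v₂' x) x := (hasDerivAt_mul_const θ).cos
  convert_to (∫ (x : ℝ) in (-1)..1, u₁ x * v₁' x) * θ = _ using 1
  · simp_rw [u₁, v₁', f, ← intervalIntegral.integral_mul_const, sq θ, mul_assoc]
  rw [integral_mul_deriv_eq_deriv_mul (fun x _ => hu₁ x) (fun x _ => hv₁ x)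
    (hu₁d.intervalIntegrable _ _) (hv₁d.intervalIntegrable _ _), hu₁_eval_one, hu₁_eval_neg_one,
    zero_mul, zero_mul, sub_zero, zero_sub, ← integral_neg, ← integral_mul_const]
  convert_to ((-2 : ℝ) * (n + 1)) * ∫ (x : ℝ) in (-1)..1, (u₂ x * v₂' x) = _ using 1
  · rw [← integral_const_mul]
    congr 1 with x
    dsimp [u₁', v₁, u₂, v₂']
    ring
  rw [integral_mul_deriv_eq_deriv_mul (fun x _ => hu₂ x) (fun x _ => hv₂ x)
    (hu₂d.intervalIntegrable _ _) (hv₂d.intervalIntegrable _ _),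
    mul_sub, t, neg_mul, neg_mul, neg_mul, sub_neg_eq_add]
  have (x : _) : u₂' x = (2 * n + 1) * f x ^ n - 2 * n * f x ^ (n - 1) := by
    cases n with
    | zero => simp [u₂']
    | succ n => ring!
  simp_rw [this, sub_mul, mul_assoc _ _ (v₂ _)]
  have : Continuous v₂ := by fun_prop
  rw [mul_mul_mul_comm, integral_sub, mul_sub, add_sub_assoc]
  · congr 1
    simp_rw [integral_const_mul]
    ring!
  all_goals exact Continuous.intervalIntegrable (by fun_prop) _ _

theorem Icar_rec (n : ℕ) :
    Icar (n + 2) θ * θ ^ 2 =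
      2 * (n + 2) * (2 * n + 3) * Icar (n + 1) θ - 4 * (n + 2) * (n + 1) * Icar n θ := by
  rw [Icar_rec' (n + 1)]
  push_cast
  ring

theorem Icar_one : Icar 1 θ * θ ^ 3 = 4 * sin θ - 4 * θ * cos θ := by
  rw [_root_.pow_succ, ← mul_assoc, Icar_rec' 0, sub_mul, add_mul, mul_assoc _ (Icar 0 θ), Icar_zero]
  ring

theorem abs_Icar_le (n : ℕ) (θ : ℝ) : |Icar n θ| ≤ 2 := by
  have h := intervalIntegral.norm_integral_le_of_norm_le_const (a := (-1:ℝ)) (b := 1) (C := 1)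
    (f := fun x : ℝ => (1 - x ^ 2) ^ n * cos (x * θ)) (by
      intro x hx
      rw [Set.uIoc_of_le (by norm_num)] at hx
      obtain ⟨h1, h2⟩ := hx
      rw [Real.norm_eq_abs, abs_mul, abs_pow]
      have h3 : |1 - x ^ 2| ≤ 1 := by
        rw [abs_le]; constructor <;> nlinarith
      exact mul_le_one₀ (pow_le_one₀ (abs_nonneg _) h3) (abs_nonneg _) (abs_cos_le_one _))
  rw [Real.norm_eq_abs] at h
  unfold Icar
  norm_num at h
  linarith

theorem jsph_eq (z : ℝ) (hz : 0 < z) (k : ℕ) :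
    jsph k z = z ^ k / (2 ^ (k + 1) * (k ! : ℝ)) * Icar k z ∧
    jsph (k + 1) z = z ^ (k + 1) / (2 ^ (k + 2) * ((k + 1)! : ℝ)) * Icar (k + 1) z := by
  have hz' := hz.ne'
  induction k with
  | zero =>
    have h0 := Icar_zero (θ := z)
    have h1 := Icar_one (θ := z)
    have e0 : Icar 0 z = 2 * sin z / z := by field_simp; linarith
    have e1 : Icar 1 z = (4 * sin z - 4 * z * cos z) / z ^ 3 := by field_simp; linarith
    constructor
    · simp [jsph, e0]; field_simp
    · simp [jsph, e1]; field_simp; ring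
  | succ k ih =>
    refine ⟨ih.2, ?_⟩
    have h := Icar_rec (θ := z) k
    have e : Icar (k + 2) z = (2 * (k + 2) * (2 * k + 3) * Icar (k + 1) z
      - 4 * (k + 2) * (k + 1) * Icar k z) / z ^ 2 := by field_simp; linarith
    rw [show k + 1 + 1 = k + 2 from rfl, e, jsph, ih.1, ih.2]
    have hf : ((k ! : ℕ) : ℝ) ≠ 0 := by positivity
    simp only [Nat.factorial_succ]
    push_cast
    have : (k : ℝ) + 1 ≠ 0 := by positivity
    have : (k : ℝ) + 1 + 1 ≠ 0 := by positivity
    field_simp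
    ring

theorem jsph_tendsto (z : ℝ) (hz : 0 < z) : Filter.Tendsto (fun k => jsph k z) Filter.atTop (nhds 0) := by
  apply squeeze_zero_norm (a := fun k => 2 * (z ^ k / (k ! : ℝ)))
  · intro k
    rw [(jsph_eq z hz k).1, Real.norm_eq_abs, abs_mul, abs_of_nonneg (by positivity), mul_comm]
    apply mul_le_mul (abs_Icar_le k z) _ (by positivity) (by norm_num)
    apply div_le_div_of_nonneg_left (by positivity) (by positivity)
    have : (1:ℝ) ≤ 2 ^ (k+1) := one_le_pow₀ (by norm_num)
    have : (0:ℝ) < (k ! : ℝ) := by positivity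
    nlinarith
  · simpa using (FloorSemiring.tendsto_pow_div_factorial_atTop z).const_mul 2

theorem wronsk (z : ℝ) (hz : 0 < z) (k : ℕ) :
    jsph k z * ysph (k + 1) z - jsph (k + 1) z * ysph k z = - 1 / z ^ 2 := by
  have hz' := hz.ne'
  induction k with
  | zero =>
    have := sin_sq_add_cos_sq z
    simp only [jsph, ysph]
    field_simp
    linear_combination (-z) * this
  | succ k ih =>
    rw [← ih]
    simp only [jsph, ysph]
    ring

theorem exists_growth (z : ℝ) (hz : 0 < z) (M : ℕ) :
    ∃ k, M ≤ k ∧ |ysph k z| ≤ |ysph (k + 1) z| := by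
  by_contra! hcon
  have hb : ∀ k, M ≤ k → |ysph k z| ≤ |ysph M z| := by
    intro k hk
    induction k, hk using Nat.le_induction with
    | base => exact le_rfl
    | succ k hk ih => exact (hcon k hk).le.trans ih
  have h0 := jsph_tendsto z hz
  have h1 := h0.comp (Filter.tendsto_add_atTop_nat 1)
  have h2 : Filter.Tendsto (fun k => (|jsph k z| + |jsph (k + 1) z|) * |ysph M z|)
      Filter.atTop (nhds 0) := by
    simpa using (h0.abs.add h1.abs).mul_const |ysph M z|
  have h3 : (0:ℝ) < 1 / z ^ 2 := by positivity
  obtain ⟨k, hk, hkM⟩ := ((h2.eventually_lt_const h3).and (Filter.eventually_ge_atTop M)).exists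
  have w := wronsk z hz k
  have a1 : |jsph k z * ysph (k + 1) z| ≤ |jsph k z| * |ysph M z| := by
    rw [abs_mul]; exact mul_le_mul_of_nonneg_left (hb _ (by omega)) (abs_nonneg _)
  have a2 : |jsph (k + 1) z * ysph k z| ≤ |jsph (k + 1) z| * |ysph M z| := by
    rw [abs_mul]; exact mul_le_mul_of_nonneg_left (hb _ (by omega)) (abs_nonneg _)
  have := abs_le.1 a1
  have := abs_le.1 a2
  have e : - 1 / z ^ 2 = - (1 / z ^ 2) := by ring
  rw [e] at w
  linarith

theorem ysph_growth (z : ℝ) (hz : 0 < z) :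
    ∃ K : ℕ, ∀ k, K ≤ k → |ysph k z| ≤ |ysph (k + 1) z| ∧ ysph (k + 1) z ≠ 0 := by
  obtain ⟨M, hM⟩ := exists_nat_ge z
  obtain ⟨K, hK, hg⟩ := exists_growth z hz M
  have key : ∀ k, K ≤ k → |ysph k z| ≤ |ysph (k + 1) z| := by
    intro k hk
    induction k, hk using Nat.le_induction with
    | base => exact hg
    | succ k hk ih =>
      have hk' : (M : ℝ) ≤ k := by exact_mod_cast hK.trans hk
      have hc : 2 ≤ (2 * (k : ℝ) + 3) / z := by rw [le_div_iff₀ hz]; linarith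
      rw [show k + 1 + 1 = k + 2 from rfl, ysph]
      have h1 := abs_sub_abs_le_abs_sub ((2 * (k : ℝ) + 3) / z * ysph (k + 1) z) (ysph k z)
      rw [abs_mul, abs_of_nonneg (by linarith : (0:ℝ) ≤ (2 * (k : ℝ) + 3) / z)] at h1
      nlinarith [abs_nonneg (ysph (k + 1) z)]
  refine ⟨K, fun k hk => ⟨key k hk, fun h0 => ?_⟩⟩
  have h1 := key k hk
  rw [h0, abs_zero] at h1
  have h2 : ysph k z = 0 := abs_eq_zero.1 (le_antisymm h1 (abs_nonneg _))
  have w := wronsk z hz k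
  rw [h0, h2] at w
  have : (0:ℝ) < 1 / z ^ 2 := by positivity
  have e : - 1 / z ^ 2 = - (1 / z ^ 2) := by ring
  rw [e] at w
  linarith

theorem ysph_hasDeriv (w : ℝ) (hw : w ≠ 0) (k : ℕ) :
    HasDerivAt (ysph k) (k / w * ysph k w - ysph (k + 1) w) w ∧
    HasDerivAt (ysph (k + 1)) (ysph k w - (k + 2) / w * ysph (k + 1) w) w := by
  induction k with
  | zero =>
    have hc := hasDerivAt_cos w
    have hs := hasDerivAt_sin w
    have hi := hasDerivAt_id' w
    constructor
    · have := (hc.fun_neg).fun_div hi hw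
      have e : ysph 0 = fun x => -cos x / x := by funext x; simp [ysph]
      rw [e]
      convert! this using 1
      simp [ysph]; field_simp; ring
    · have := ((hc.fun_neg).fun_div (hi.fun_pow 2) (pow_ne_zero 2 hw)).fun_sub (hs.fun_div hi hw)
      have e : ysph (0 + 1) = fun x => -cos x / x ^ 2 - sin x / x := by funext x; simp [ysph]
      rw [e]
      convert! this using 1
      simp [ysph]; field_simp; ring
  | succ k ih =>
    constructor
    · convert! ih.2 using 1
      rw [show k + 1 + 1 = k + 2 from rfl, ysph]
      push_cast
      field_simp
      ring
    · have e : ysph (k + 1 + 1) = fun x => ((2 * (k : ℝ) + 3) / x) * ysph (k + 1) x - ysph k x := by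
        funext x; rw [ysph]
      have hi := hasDerivAt_id' w
      have := (((hasDerivAt_const w (2 * (k : ℝ) + 3)).fun_div hi hw).fun_mul ih.2).fun_sub ih.1
      rw [e]
      convert! this using 1
      push_cast
      field_simp
      ring

theorem deriv_G (z : ℝ) (hz : 0 < z) (k : ℕ) (hy : ysph (k + 1) z ≠ 0) :
    deriv (fun w => 1/2 + w * deriv (ysph (k + 1)) w / ysph (k + 1) w) z =
      (2 * k + 3) * (ysph k z / ysph (k + 1) z) - z - z * (ysph k z / ysph (k + 1) z) ^ 2 := by
  have hz' := hz.ne'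
  have e : (fun w => 1/2 + w * deriv (ysph (k + 1)) w / ysph (k + 1) w) =ᶠ[nhds z]
      (fun w => 1/2 + w * (ysph k w - (k + 2) / w * ysph (k + 1) w) / ysph (k + 1) w) := by
    filter_upwards [lt_mem_nhds hz] with w hw
    rw [(ysph_hasDeriv w hw.ne' k).2.deriv]
  rw [e.deriv_eq]
  obtain ⟨d0, d1⟩ := ysph_hasDeriv z hz' k
  have hi := hasDerivAt_id' z
  have := ((hi.fun_mul (d0.fun_sub (((hasDerivAt_const z ((k : ℝ) + 2)).fun_div hi hz').fun_mul
    d1))).fun_div d1 hy).const_add (1/2)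
  rw [this.deriv]
  field_simp
  ring

theorem ratio_bound (z : ℝ) (hz : 0 < z) :
    ∃ K : ℕ, ∀ k : ℕ, K ≤ k → ysph (k + 1) z ≠ 0 ∧ z ≤ k ∧ 1 ≤ k ∧
      ∃ s r : ℝ, r = ysph k z / ysph (k + 1) z ∧ |s| ≤ z / k ∧ |r| ≤ z / k ∧
        r * (2 * k + 1 - z * s) = z ∧ |s| ≤ 1 := by
  obtain ⟨K, hK⟩ := ysph_growth z hz
  obtain ⟨M, hM⟩ := exists_nat_ge z
  have A : ∀ k, K ≤ k → |ysph k z / ysph (k + 1) z| ≤ 1 := by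
    intro k hk
    rw [abs_div]
    exact div_le_one_of_le₀ (hK k hk).1 (abs_nonneg _)
  have B : ∀ k, K ≤ k → ysph (k + 1) z / ysph (k + 2) z *
      (2 * k + 3 - z * (ysph k z / ysph (k + 1) z)) = z := by
    intro k hk
    have h1 := (hK k hk).2
    have h2 : ysph (k + 2) z ≠ 0 := (hK (k + 1) (by omega)).2
    have h3 : ysph (k + 2) z = ((2 * (k : ℝ) + 3) / z) * ysph (k + 1) z - ysph k z := by rw [ysph]
    have h4 : z * ysph (k + 2) z = (2 * (k : ℝ) + 3) * ysph (k + 1) z - z * ysph k z := by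
      rw [h3]; field_simp
    field_simp
    linarith
  have D : ∀ k, K ≤ k → M ≤ k → |ysph (k + 1) z / ysph (k + 2) z| ≤ z / (k + 2) := by
    intro k hk hkM
    have a := abs_le.1 (A k hk)
    have b := B k hk
    have hkM' : z ≤ k := hM.trans (by exact_mod_cast hkM)
    set s := ysph k z / ysph (k + 1) z
    have hp : (k : ℝ) + 2 ≤ 2 * k + 3 - z * s := by nlinarith
    have hp0 : (0 : ℝ) < k + 2 := by positivity
    have : ysph (k + 1) z / ysph (k + 2) z = z / (2 * k + 3 - z * s) := by
      rw [eq_div_iff (by linarith)]; exact b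
    rw [this, abs_of_nonneg (by apply div_nonneg hz.le; linarith)]
    exact div_le_div_of_nonneg_left hz.le hp0 hp
  refine ⟨K + M + 2, fun k hk => ?_⟩
  obtain ⟨l, rfl⟩ : ∃ l, k = l + 2 := ⟨k - 2, by omega⟩
  have hl : z ≤ l := hM.trans (by exact_mod_cast (by omega : M ≤ l))
  refine ⟨(hK _ (by omega)).2, by push_cast; linarith, by omega,
    ysph (l + 1) z / ysph (l + 2) z, ysph (l + 2) z / ysph (l + 3) z, rfl, ?_, ?_, ?_, ?_⟩
  · simpa using D l (by omega) (by omega)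
  · refine (D (l + 1) (by omega) (by omega)).trans ?_
    push_cast
    apply div_le_div_of_nonneg_left hz.le (by positivity) (by linarith)
  · have := B (l + 1) (by omega)
    push_cast at this ⊢
    refine Eq.trans ?_ this
    ring
  · exact A (l + 1) (by omega)

end BesselAux

/-- Asymptotic two-sided bound on the derivative of
`G_ν(w) = 1/2 + w y'_{n-1}(w)/y_{n-1}(w) = w Y'_ν(w)/Y_ν(w)`, `ν = n - 1/2`. -/
theorem deriv_logderiv_bessel_Y_asymptotic (z : ℝ) (hz : 0 < z) :
    ∃ C : ℝ, 0 < C ∧ ∃ N : ℕ, 1 ≤ N ∧ ∀ n : ℕ, N ≤ n →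
      -(1/3) * z / ((n : ℝ) - 1/2) - C / ((n : ℝ) - 1/2) ^ 2
        ≤ deriv (fun w => 1/2 + w * deriv (ysph (n - 1)) w / ysph (n - 1) w) z ∧
      deriv (fun w => 1/2 + w * deriv (ysph (n - 1)) w / ysph (n - 1) w) z
        ≤ (7/3) * z / ((n : ℝ) - 1/2) + C / ((n : ℝ) - 1/2) ^ 2 := by
  obtain ⟨K, hK⟩ := ratio_bound z hz
  obtain ⟨M, hM⟩ := exists_nat_ge z
  refine ⟨13 * z ^ 3, by positivity, K + M + 5, by omega, fun n hn => ?_⟩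
  obtain ⟨k, rfl⟩ : ∃ k, n = k + 2 := ⟨n - 2, by omega⟩
  obtain ⟨hy, -, hk1, s, r, hr, hs, hrb, hrec, hs1⟩ := hK k (by omega)
  rw [show k + 2 - 1 = k + 1 from rfl, deriv_G z hz k hy, ← hr]
  have hkz : z + 1 ≤ k := by
    have : ((M + 1 : ℕ) : ℝ) ≤ k := by exact_mod_cast (by omega : M + 1 ≤ k)
    push_cast at this
    linarith
  have hk1' : (1 : ℝ) ≤ k := by exact_mod_cast hk1
  have hk0 : (0 : ℝ) < k := by linarith
  have hs1' := abs_le.1 hs1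
  have hden : 2 * (k : ℝ) + 1 - z ≤ 2 * k + 1 - z * s := by nlinarith
  have hden0 : 0 < 2 * (k : ℝ) + 1 - z := by linarith
  have hr' : r = z / (2 * k + 1 - z * s) := by rw [eq_div_iff (by linarith)]; exact hrec
  have hr0 : 0 ≤ r := by rw [hr']; exact div_nonneg hz.le (by linarith)
  have hr1 : r ≤ z / (2 * k + 1 - z) := by
    rw [hr']; exact div_le_div_of_nonneg_left hz.le hden0 hden
  have hcast : ((k + 2 : ℕ) : ℝ) - 1 / 2 = k + 3 / 2 := by push_cast; ring
  rw [hcast]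
  have hG : (2 * k + 3) * r - z - z * r ^ 2 = 2 * r + z * (s * r - r ^ 2) := by
    linear_combination hrec
  rw [hG]
  have hb : |z * (s * r - r ^ 2)| ≤ 13 * z ^ 3 / ((k : ℝ) + 3 / 2) ^ 2 := by
    have h1 : |s * r| ≤ z / k * (z / k) := by
      rw [abs_mul]; exact mul_le_mul hs hrb (abs_nonneg _) (by positivity)
    have h2 : |r ^ 2| ≤ z / k * (z / k) := by
      rw [sq, abs_mul]; exact mul_le_mul hrb hrb (abs_nonneg _) (by positivity)
    rw [abs_mul, abs_of_pos hz]
    calc z * |s * r - r ^ 2| ≤ z * (z / k * (z / k) + z / k * (z / k)) := by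
          apply mul_le_mul_of_nonneg_left _ hz.le
          exact (abs_sub _ _).trans (add_le_add h1 h2)
      _ = z ^ 3 * (2 / (k : ℝ) ^ 2) := by field_simp; ring
      _ ≤ z ^ 3 * (13 / ((k : ℝ) + 3 / 2) ^ 2) := by
          apply mul_le_mul_of_nonneg_left _ (by positivity)
          rw [div_le_div_iff₀ (by positivity) (by positivity)]
          nlinarith
      _ = _ := by ring
  obtain ⟨hb1, hb2⟩ := abs_le.1 hb
  constructor
  · have : 0 ≤ z / ((k : ℝ) + 3 / 2) := by positivity
    have e : -(1/3) * z / ((k : ℝ) + 3 / 2) = -(1/3) * (z / ((k : ℝ) + 3 / 2)) := by ring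
    rw [e]
    linarith
  · have : 2 * (z / (2 * (k : ℝ) + 1 - z)) ≤ (7/3) * z / ((k : ℝ) + 3 / 2) := by
      rw [← mul_div_assoc, div_le_div_iff₀ hden0 (by positivity)]
      nlinarith
    linarith
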